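/- Suppose A has the negative binomial distribution with parameters r ≥ 1 (an integer) and 0 < p < 1, i.e., ℙ[A = k] = C(k + r − 1, k) p^r (1−p)^k for k ∈ ℕ. Then E[X²] < ∞ if and only if r(1−p) + r²(1−p)² < p²; for r = 1 this is equivalent to p > 2/3, and for r ≥ 2 it is equivalent to p > (2r² + r)/(2(r² − 1)) − (1/2)·√((5r² + 4r)/(r² − 1)²). When the condition holds, Var(X) = (p−1)p²r / ((pr + p − r)² (p²(r² − 1) − p·r(2r + 1) + r(r + 1))). -/

import Mathlib

open MeasureTheory ProbabilityTheory ENNReal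


lemma aux_c1 (n d : ℕ) : ((n:ℝ)+d+1) * ((n+d).choose d : ℝ) = (d+1) * ((n+(d+1)).choose (d+1) : ℝ) := by
  have := Nat.add_one_mul_choose_eq (n+d) d
  have h2 : ((n+d+1 : ℕ):ℝ) * ((n+d).choose d : ℝ) = ((n+d+1).choose (d+1) : ℝ) * (d+1 : ℕ) := by
    exact_mod_cast this
  push_cast at h2
  rw [← add_assoc]; linarith

lemma aux_s0 (d : ℕ) (x : ℝ) (h0 : 0 < x) (h1 : x < 1) :
    HasSum (fun n : ℕ => ((n+d).choose d : ℝ) * x^n) (1/(1-x)^(d+1)) :=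
  hasSum_choose_mul_geometric_of_norm_lt_one d (by rw [Real.norm_eq_abs, abs_of_pos h0]; exact h1)

lemma aux_s1 (d : ℕ) (x : ℝ) (h0 : 0 < x) (h1 : x < 1) :
    HasSum (fun n : ℕ => (n:ℝ) * (((n+d).choose d : ℝ) * (1-x)^(d+1) * x^n)) ((d+1) * x/(1-x)) := by
  have hx : (1-x) ≠ 0 := by linarith
  have := ((((aux_s0 (d+1) x h0 h1).mul_left ((d:ℝ)+1)).sub
    ((aux_s0 d x h0 h1).mul_left ((d:ℝ)+1))).mul_left ((1-x)^(d+1)))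
  refine Eq.mpr (congrArg₂ (fun (f : ℕ → ℝ) (a : ℝ) => HasSum f a) ?_ ?_) this
  · funext n
    have := aux_c1 n d
    linear_combination (1-x)^(d+1) * x^n * this
  · field_simp
    ring

lemma aux_s2 (d : ℕ) (x : ℝ) (h0 : 0 < x) (h1 : x < 1) :
    HasSum (fun n : ℕ => (n:ℝ)^2 * (((n+d).choose d : ℝ) * (1-x)^(d+1) * x^n))
      (((d+1) * x + (d+1)^2 * x^2)/(1-x)^2) := by
  have hx : (1-x) ≠ 0 := by linarith
  have := (((((aux_s0 (d+2) x h0 h1).mul_left (((d:ℝ)+1)*(d+2))).sub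
    ((aux_s0 (d+1) x h0 h1).mul_left ((2*(d:ℝ)+3)*(d+1)))).add
    ((aux_s0 d x h0 h1).mul_left (((d:ℝ)+1)^2))).mul_left ((1-x)^(d+1)))
  refine Eq.mpr (congrArg₂ (fun (f : ℕ → ℝ) (a : ℝ) => HasSum f a) ?_ ?_) this
  · funext n
    have e1 := aux_c1 n d
    have e2 := aux_c1 n (d+1)
    push_cast at e2
    have e2' : ((n:ℝ)+(d+1)+1) * ((n+(d+1)).choose (d+1) : ℝ) = (d+1+1) * ((n+(d+2)).choose (d+2) : ℝ) := e2
    linear_combination (1-x)^(d+1) * x^n * ((n+d+2) * e1 + (d+1) * e2' - (2*d+3)*e1)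
  · field_simp
    ring

lemma aux_sum {Ω : Type*} [MeasurableSpace Ω] {P : Measure Ω}
    {A : Ω → ℕ} (hA : Measurable A) (c w : ℕ → ℝ) (hc : ∀ k, 0 ≤ c k) (hw : ∀ k, 0 ≤ w k) (S : ℝ)
    (h : ∀ k : ℕ, P {ω | A ω = k} = ENNReal.ofReal (w k))
    (hs : HasSum (fun k => c k * w k) S) :
    ∫⁻ ω, ENNReal.ofReal (c (A ω)) ∂P = ENNReal.ofReal S := by
  rw [← lintegral_map (f := fun k => ENNReal.ofReal (c k)) (by fun_prop) hA, lintegral_countable',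
    ← hs.tsum_eq, ENNReal.ofReal_tsum_of_nonneg (fun k => mul_nonneg (hc k) (hw k)) hs.summable]
  congr 1; ext k
  rw [Measure.map_apply hA (measurableSet_singleton k), ENNReal.ofReal_mul (hc k), ← h k]
  rfl

lemma aux_ind {Ω : Type*} [MeasurableSpace Ω] {P : Measure Ω}
    {A X : Ω → ℕ} (hA : Measurable A) (hX : Measurable X) (hAX : IndepFun A X P) (f g : ℕ → ℝ≥0∞) :
    ∫⁻ ω, f (A ω) * g (X ω) ∂P = (∫⁻ ω, f (A ω) ∂P) * ∫⁻ ω, g (X ω) ∂P := by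
  have hf : Measurable f := by fun_prop
  have hg : Measurable g := by fun_prop
  exact lintegral_mul_eq_lintegral_mul_lintegral_of_indepFun (hf.comp hA) (hg.comp hX)
    (hAX.comp hf hg)

lemma aux_m1 {Ω : Type*} [MeasurableSpace Ω] {P : Measure Ω} [IsProbabilityMeasure P]
    {A X : Ω → ℕ} (hA : Measurable A) (hX : Measurable X) (hAX : IndepFun A X P) (g : ℕ → ℝ≥0∞) :
    ∫⁻ ω, ((A ω : ℝ≥0∞) * g (X ω) + 1) ∂P = (∫⁻ ω, (A ω : ℝ≥0∞) ∂P) * (∫⁻ ω, g (X ω) ∂P) + 1 := by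
  rw [lintegral_add_right _ measurable_const, aux_ind hA hX hAX (fun k => (k : ℝ≥0∞)) g]
  simp

lemma aux_m2 {Ω : Type*} [MeasurableSpace Ω] {P : Measure Ω} [IsProbabilityMeasure P]
    {A X : Ω → ℕ} (hA : Measurable A) (hX : Measurable X) (hAX : IndepFun A X P) (g : ℕ → ℝ≥0∞) :
    ∫⁻ ω, ((A ω : ℝ≥0∞) * g (X ω) + 1)^2 ∂P =
      (∫⁻ ω, (A ω : ℝ≥0∞)^2 ∂P) * (∫⁻ ω, (g (X ω))^2 ∂P) +
        2 * ((∫⁻ ω, (A ω : ℝ≥0∞) ∂P) * (∫⁻ ω, g (X ω) ∂P)) + 1 := by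
  have hg : Measurable (fun ω => g (X ω)) :=
    (show Measurable g by fun_prop).comp hX
  have hA' : Measurable (fun ω => (A ω : ℝ≥0∞)) :=
    (show Measurable (fun k : ℕ => (k : ℝ≥0∞)) by fun_prop).comp hA
  have e : ∀ ω, ((A ω : ℝ≥0∞) * g (X ω) + 1)^2 =
      ((A ω : ℝ≥0∞)^2 * (g (X ω))^2 + 2 * ((A ω : ℝ≥0∞) * g (X ω))) + 1 := fun ω => by ring
  simp_rw [e]
  rw [lintegral_add_right _ measurable_const, lintegral_add_right _ (by fun_prop),
    lintegral_const_mul _ (by fun_prop), aux_ind hA hX hAX (fun k => (k : ℝ≥0∞)) g,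
    aux_ind hA hX hAX (fun k => (k : ℝ≥0∞)^2) (fun k => g k ^ 2)]
  simp

lemma aux_fix {Ω : Type*} [MeasurableSpace Ω] {P : Measure Ω}
    {A X : Ω → ℕ} (hA : Measurable A) (hX : Measurable X)
    (hfix : Measure.map X P = Measure.map (fun ω => A ω * X ω + 1) P) (h : ℕ → ℝ≥0∞) :
    ∫⁻ ω, h (X ω) ∂P = ∫⁻ ω, h (A ω * X ω + 1) ∂P := by
  have hh : Measurable h := by fun_prop
  rw [← lintegral_map hh hX, hfix, lintegral_map hh (by fun_prop)]

lemma aux_min (a x M : ℕ) : ((min (a * x + 1) M : ℕ) : ℝ≥0∞) ≤ (a : ℝ≥0∞) * ((min x M : ℕ) : ℝ≥0∞) + 1 := by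
  have : min (a * x + 1) M ≤ a * min x M + 1 := by
    rcases le_total x M with h | h
    · rw [min_eq_left h]; exact min_le_left _ _
    · rw [min_eq_right h]
      rcases Nat.eq_zero_or_pos a with h0 | h0
      · subst h0; simp
      · exact (min_le_right _ _).trans (by nlinarith)
  exact_mod_cast this

lemma aux_main {Ω : Type*} [MeasurableSpace Ω] {P : Measure Ω} [IsProbabilityMeasure P]
    {A X : Ω → ℕ} (hA : Measurable A) (hX : Measurable X)
    (hAX : IndepFun A X P)
    (hfix : Measure.map X P = Measure.map (fun ω => A ω * X ω + 1) P)
    (m s : ℝ) (hm : 0 ≤ m) (hms : m ≤ s)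
    (h1 : ∫⁻ ω, (A ω : ℝ≥0∞) ∂P = ENNReal.ofReal m)
    (h2 : ∫⁻ ω, (A ω : ℝ≥0∞)^2 ∂P = ENNReal.ofReal s) :
    ((∫⁻ ω, (X ω : ℝ≥0∞) ^ 2 ∂P) < ⊤ ↔ s < 1) ∧
    (s < 1 → (∫⁻ ω, (X ω : ℝ≥0∞) ^ 2 ∂P) - (∫⁻ ω, (X ω : ℝ≥0∞) ∂P) ^ 2 =
        ENNReal.ofReal ((1 + 2 * m / (1 - m)) / (1 - s) - (1 / (1 - m))^2)) := by
  have hs : 0 ≤ s := hm.trans hms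
  have E1 := aux_m1 hA hX hAX (fun k => (k : ℝ≥0∞))
  have E2 := aux_m2 hA hX hAX (fun k => (k : ℝ≥0∞))
  have F1 := aux_fix hA hX hfix (fun k => (k : ℝ≥0∞))
  have F2 := aux_fix hA hX hfix (fun k => (k : ℝ≥0∞)^2)
  push_cast at F1 F2
  rw [← F1, h1] at E1
  rw [← F2, h1, h2] at E2
  have hle : ∫⁻ ω, (X ω : ℝ≥0∞) ∂P ≤ ∫⁻ ω, (X ω : ℝ≥0∞) ^ 2 ∂P := by
    apply lintegral_mono
    intro ω
    have : X ω ≤ X ω ^ 2 := Nat.le_self_pow (by norm_num) _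
    show (X ω : ℝ≥0∞) ≤ (X ω : ℝ≥0∞) ^ 2
    exact_mod_cast this
  set x := ∫⁻ ω, (X ω : ℝ≥0∞) ∂P with hx
  set y := ∫⁻ ω, (X ω : ℝ≥0∞) ^ 2 ∂P with hy
  have key : ∀ u v : ℝ≥0∞, v ≠ ⊤ → u ≤ v → (u ≤ ENNReal.ofReal m * u + 1) →
      (v ≤ ENNReal.ofReal s * v + 2 * (ENNReal.ofReal m * u) + 1) →
      u.toReal ≤ m * u.toReal + 1 ∧ v.toReal ≤ s * v.toReal + 2 * (m * u.toReal) + 1 := by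
    intro u v hv huv hu' hv'
    have hu : u ≠ ⊤ := ne_top_of_le_ne_top hv huv
    lift u to NNReal using hu
    lift v to NNReal using hv
    have hm' : ENNReal.ofReal m = ((m.toNNReal : NNReal) : ℝ≥0∞) := rfl
    have hs' : ENNReal.ofReal s = ((s.toNNReal : NNReal) : ℝ≥0∞) := rfl
    rw [hm'] at hu' hv'
    rw [hs'] at hv'
    have a1 : u ≤ m.toNNReal * u + 1 := by exact_mod_cast hu'
    have a2 : v ≤ s.toNNReal * v + 2 * (m.toNNReal * u) + 1 := by exact_mod_cast hv'
    have b1 := NNReal.coe_le_coe.2 a1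
    have b2 := NNReal.coe_le_coe.2 a2
    push_cast [Real.coe_toNNReal _ hm, Real.coe_toNNReal _ hs] at b1 b2
    exact ⟨b1, b2⟩
  have keyeq : y ≠ ⊤ → x.toReal = m * x.toReal + 1 ∧
      y.toReal = s * y.toReal + 2 * (m * x.toReal) + 1 := by
    intro hv
    have hu : x ≠ ⊤ := ne_top_of_le_ne_top hv hle
    constructor
    · conv_lhs => rw [E1]
      rw [ENNReal.toReal_add (by finiteness) (by simp), ENNReal.toReal_mul,
        ENNReal.toReal_ofReal hm]; simp
    · conv_lhs => rw [E2]
      rw [ENNReal.toReal_add (by finiteness) (by simp),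
        ENNReal.toReal_add (by finiteness) (by finiteness)]
      simp [ENNReal.toReal_mul, ENNReal.toReal_ofReal hm, ENNReal.toReal_ofReal hs]
  have fin : s < 1 → y ≠ ⊤ := by
    intro hs1
    have hm1 : m < 1 := by linarith
    have bd : ∀ M : ℕ, ∫⁻ ω, ((min (X ω) M : ℕ) : ℝ≥0∞)^2 ∂P ≤
        ENNReal.ofReal ((1 + 2 * (m * (1 / (1 - m)))) / (1 - s)) := by
      intro M
      have G1 := aux_m1 hA hX hAX (fun k => ((min k M : ℕ) : ℝ≥0∞))
      have G2 := aux_m2 hA hX hAX (fun k => ((min k M : ℕ) : ℝ≥0∞))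
      have H1 := aux_fix hA hX hfix (fun k => ((min k M : ℕ) : ℝ≥0∞))
      have H2 := aux_fix hA hX hfix (fun k => ((min k M : ℕ) : ℝ≥0∞)^2)
      have hv : ∫⁻ ω, ((min (X ω) M : ℕ) : ℝ≥0∞)^2 ∂P ≠ ⊤ := by
        apply ne_top_of_le_ne_top (b := (M : ℝ≥0∞)^2) (by finiteness)
        calc _ ≤ ∫⁻ ω, (M : ℝ≥0∞)^2 ∂P := by
              apply lintegral_mono
              intro ω
              have : min (X ω) M ≤ M := min_le_right _ _
              show ((min (X ω) M : ℕ) : ℝ≥0∞)^2 ≤ (M : ℝ≥0∞)^2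
              gcongr
          _ = _ := by simp
      obtain ⟨k1, k2⟩ := key (∫⁻ ω, ((min (X ω) M : ℕ) : ℝ≥0∞) ∂P)
        (∫⁻ ω, ((min (X ω) M : ℕ) : ℝ≥0∞)^2 ∂P) hv
        (by
          apply lintegral_mono
          intro ω
          have : min (X ω) M ≤ min (X ω) M ^ 2 := Nat.le_self_pow (by norm_num) _
          show ((min (X ω) M : ℕ) : ℝ≥0∞) ≤ ((min (X ω) M : ℕ) : ℝ≥0∞) ^ 2
          exact_mod_cast this)
        (by
          rw [← h1, ← G1, H1]
          exact lintegral_mono (fun ω => aux_min _ _ _))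
        (by
          rw [← h1, ← h2, ← G2, H2]
          exact lintegral_mono (fun ω => pow_le_pow_left' (aux_min _ _ _) 2))
      rw [ENNReal.le_ofReal_iff_toReal_le hv (by
        have : 0 < 1 - s := by linarith
        have : 0 < 1 - m := by linarith
        positivity)]
      have q1 : (∫⁻ ω, ((min (X ω) M : ℕ) : ℝ≥0∞) ∂P).toReal ≤ 1 / (1 - m) := by
        rw [le_div_iff₀ (by linarith)]; linarith
      have q2 := mul_le_mul_of_nonneg_left q1 hm
      rw [le_div_iff₀ (by linarith)]; linarith
    have lim : Filter.Tendsto (fun M : ℕ => ∫⁻ ω, ((min (X ω) M : ℕ) : ℝ≥0∞)^2 ∂P) Filter.atTop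
        (nhds y) := by
      apply lintegral_tendsto_of_tendsto_of_monotone
      · intro M
        exact ((show Measurable (fun k : ℕ => ((min k M : ℕ) : ℝ≥0∞)^2) by fun_prop).comp
          hX).aemeasurable
      · refine Filter.Eventually.of_forall fun ω M N hMN => ?_
        have : min (X ω) M ≤ min (X ω) N := min_le_min_left _ hMN
        show ((min (X ω) M : ℕ) : ℝ≥0∞)^2 ≤ ((min (X ω) N : ℕ) : ℝ≥0∞)^2
        gcongr
      · refine Filter.Eventually.of_forall fun ω => ?_
        apply tendsto_const_nhds.congr'
        filter_upwards [Filter.eventually_ge_atTop (X ω)] with M hM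
        rw [min_eq_left hM]
    exact ne_top_of_le_ne_top ENNReal.ofReal_ne_top (le_of_tendsto' lim bd)
  refine ⟨⟨fun h => ?_, fun h => (fin h).lt_top⟩, fun h => ?_⟩
  · obtain ⟨k1, k2⟩ := keyeq h.ne
    by_contra hc
    push Not at hc
    have := ENNReal.toReal_nonneg (a := x)
    have := ENNReal.toReal_nonneg (a := y)
    nlinarith [mul_nonneg hm (ENNReal.toReal_nonneg (a := x))]
  · have hv := fin h
    have hu : x ≠ ⊤ := ne_top_of_le_ne_top hv hle
    obtain ⟨k1, k2⟩ := keyeq hv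
    have hm1 : 1 - m ≠ 0 := by linarith
    have hs1 : 1 - s ≠ 0 := by linarith
    have q1 : x.toReal = 1 / (1 - m) := by
      rw [eq_div_iff hm1]; linarith
    have q2 : y.toReal = (1 + 2 * m / (1 - m)) / (1 - s) := by
      rw [eq_div_iff hs1]
      rw [q1] at k2
      linear_combination k2
    rw [← q1, ← q2, ENNReal.ofReal_sub _ (by positivity), ENNReal.ofReal_pow (by simp),
      ENNReal.ofReal_toReal hv, ENNReal.ofReal_toReal hu]

theorem stmt_9 {Ω : Type*} [MeasurableSpace Ω] {P : Measure Ω} [IsProbabilityMeasure P]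
    {A X : Ω → ℕ} (hA : Measurable A) (hX : Measurable X)
    (hAX : IndepFun A X P)
    (h0 : 0 < P {ω | A ω = 0})
    (hfix : Measure.map X P = Measure.map (fun ω => A ω * X ω + 1) P)
    (r : ℕ) (hr : 1 ≤ r) (p : ℝ) (hp0 : 0 < p) (hp1 : p < 1)
    (hnb : ∀ k : ℕ, P {ω | A ω = k} =
      ENNReal.ofReal (((k + r - 1).choose k : ℝ) * p ^ r * (1 - p) ^ k)) :
    ((∫⁻ ω, (X ω : ℝ≥0∞) ^ 2 ∂P) < ⊤ ↔
      (r : ℝ) * (1 - p) + (r : ℝ) ^ 2 * (1 - p) ^ 2 < p ^ 2) ∧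
    (r = 1 → ((r : ℝ) * (1 - p) + (r : ℝ) ^ 2 * (1 - p) ^ 2 < p ^ 2 ↔ 2 / 3 < p)) ∧
    (2 ≤ r → ((r : ℝ) * (1 - p) + (r : ℝ) ^ 2 * (1 - p) ^ 2 < p ^ 2 ↔
      (2 * (r : ℝ) ^ 2 + r) / (2 * ((r : ℝ) ^ 2 - 1)) -
        (1 / 2) * Real.sqrt ((5 * (r : ℝ) ^ 2 + 4 * r) / ((r : ℝ) ^ 2 - 1) ^ 2) < p)) ∧
    ((r : ℝ) * (1 - p) + (r : ℝ) ^ 2 * (1 - p) ^ 2 < p ^ 2 →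
      (∫⁻ ω, (X ω : ℝ≥0∞) ^ 2 ∂P) - (∫⁻ ω, (X ω : ℝ≥0∞) ∂P) ^ 2 =
        ENNReal.ofReal ((p - 1) * p ^ 2 * r /
          ((p * r + p - r) ^ 2 *
            (p ^ 2 * ((r : ℝ) ^ 2 - 1) - p * r * (2 * r + 1) + r * (r + 1))))) := by
  have hr1 : (1:ℝ) ≤ r := by exact_mod_cast hr
  obtain ⟨d, rfl⟩ : ∃ d, r = d + 1 := ⟨r - 1, by omega⟩
  have hw : ∀ k : ℕ, P {ω | A ω = k} =
      ENNReal.ofReal (((k+d).choose d : ℝ) * (1-(1-p))^(d+1) * (1-p)^k) := by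
    intro k
    rw [hnb k, show k + (d+1) - 1 = k + d by omega, _root_.sub_sub_cancel,
      Nat.choose_symm_add]
  have hwn : ∀ k : ℕ, 0 ≤ ((k+d).choose d : ℝ) * (1-(1-p))^(d+1) * (1-p)^k := by
    intro k
    have : 0 < 1 - p := by linarith
    rw [_root_.sub_sub_cancel]
    positivity
  have S1 := aux_sum hA (fun k => (k:ℝ)) _ (fun k => by positivity) hwn _ hw
    (aux_s1 d (1-p) (by linarith) (by linarith))
  have S2 := aux_sum hA (fun k => (k:ℝ)^2) _ (fun k => by positivity) hwn _ hw
    (aux_s2 d (1-p) (by linarith) (by linarith))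
  simp only [ENNReal.ofReal_natCast, _root_.sub_sub_cancel] at S1
  simp only [ENNReal.ofReal_pow (Nat.cast_nonneg _), ENNReal.ofReal_natCast, _root_.sub_sub_cancel] at S2
  clear hw hwn hnb h0
  push_cast at hr1 ⊢
  set R : ℝ := (d:ℝ) + 1 with hR
  have hm : 0 ≤ R * (1-p) / p := div_nonneg (mul_nonneg (by linarith) (by linarith)) hp0.le
  have hms : R * (1-p) / p ≤ (R * (1-p) + R^2 * (1-p)^2) / p^2 := by
    rw [div_le_div_iff₀ hp0 (by positivity)]
    have : 0 ≤ R * (1-p) * (1-p) * p := by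
      have : 0 < 1 - p := by linarith
      positivity
    have : 0 ≤ R^2 * (1-p)^2 * p := by positivity
    nlinarith
  obtain ⟨M1, M2⟩ := aux_main hA hX hAX hfix _ _ hm hms S1 S2
  have hiff : (R * (1-p) + R^2 * (1-p)^2) / p^2 < 1 ↔ R * (1 - p) + R ^ 2 * (1 - p) ^ 2 < p ^ 2 :=
    div_lt_one (by positivity)
  rw [hiff] at M1 M2
  refine ⟨M1, ?_, ?_, ?_⟩
  · intro h
    have : R = 1 := by
      have : d = 0 := by omega
      rw [hR, this]; simp
    rw [this]
    constructor <;> intro h <;> nlinarith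
  · intro h
    have hR2 : 2 ≤ R := by
      have h1 : 1 ≤ d := by omega
      have : (1:ℝ) ≤ d := by exact_mod_cast h1
      linarith
    clear_value R
    have hD : 0 < R^2 - 1 := by nlinarith
    rw [Real.sqrt_div' _ (by positivity), Real.sqrt_sq hD.le]
    set q := Real.sqrt (5 * R^2 + 4 * R) with hq
    have hq2 : q^2 = 5 * R^2 + 4 * R := Real.sq_sqrt (by positivity)
    have hq0 : 0 ≤ q := Real.sqrt_nonneg _
    have e : (2 * R^2 + R) / (2 * (R^2-1)) - 1/2 * (q / (R^2-1)) = (2*R^2+R-q)/(2*(R^2-1)) := by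
      field_simp
    rw [e, div_lt_iff₀ (by positivity)]
    have hup : 2 * (R^2-1) * p < 2 * R^2 + R + q := by nlinarith
    have id : 4 * (R^2-1) * (R * (1 - p) + R ^ 2 * (1 - p) ^ 2 - p ^ 2) =
      (2 * (R^2-1) * p - (2*R^2+R-q)) * (2 * (R^2-1) * p - (2*R^2+R+q)) := by
      linear_combination hq2
    constructor
    · intro h
      by_contra hc
      have h3 : 0 ≤ (2 * (R^2-1) * p - (2*R^2+R-q)) * (2 * (R^2-1) * p - (2*R^2+R+q)) :=
        mul_nonneg_of_nonpos_of_nonpos (by linarith) (by linarith)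
      rw [← id] at h3
      have := mul_neg_of_pos_of_neg (show 0 < 4 * (R^2-1) by linarith) (sub_neg.2 h)
      linarith
    · intro h
      have h3 : (2 * (R^2-1) * p - (2*R^2+R-q)) * (2 * (R^2-1) * p - (2*R^2+R+q)) < 0 :=
        mul_neg_of_pos_of_neg (by linarith) (by linarith)
      rw [← id] at h3
      by_contra hc
      have := mul_nonneg (show 0 ≤ 4 * (R^2-1) by nlinarith) (sub_nonneg.2 (not_lt.1 hc))
      linarith
  · intro h
    rw [M2 h]
    congr 1
    have hlt := hiff.2 h
    have n1 : p * R + p - R ≠ 0 := by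
      have : R * (1-p) / p < 1 := by linarith
      rw [div_lt_one hp0] at this
      linarith
    have n2 : p ^ 2 * (R ^ 2 - 1) - p * R * (2 * R + 1) + R * (R + 1) ≠ 0 := by
      nlinarith
    have hp : p ≠ 0 := hp0.ne'
    have a1 : 1 - R * (1-p) / p = (p * R + p - R) / p := by field_simp; ring
    have a2 : 1 - (R * (1-p) + R^2 * (1-p)^2) / p^2 =
      -(p ^ 2 * (R ^ 2 - 1) - p * R * (2 * R + 1) + R * (R + 1)) / p^2 := by field_simp; ring
    rw [a1, a2]
    clear_value R
    have n3 : -(p ^ 2 * (R ^ 2 - 1) - p * R * (2 * R + 1) + R * (R + 1)) ≠ 0 := neg_ne_zero.2 n2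
    generalize hQ : p ^ 2 * (R ^ 2 - 1) - p * R * (2 * R + 1) + R * (R + 1) = Q at *
    generalize hT : p * R + p - R = T at *
    field_simp
    subst hQ hT
    ring
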